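/- Let μ be a real number with μ > −1, let α, κ be real numbers, and let m, n be nonnegative integers. Then ∫_0^∞ L_m^{(α)}(s) L_n^{(κ)}(s) s^μ e^{−s} ds = (−1)^{m+n} Γ(μ+1) Σ_{i=0}^{min(m,n)} C(μ−α, m−i) C(μ−κ, n−i) C(i+μ, i), where C(x,k) = x(x−1)⋯(x−k+1)/k! denotes the generalized binomial coefficient. -/

import Mathlib

open MeasureTheory Real
open scoped BigOperators Classical

noncomputable section

/-- Velocity space ℝ³. -/
abbrev V3 := Fin 3 → ℝ

/-- Euclidean norm |v| on ℝ³. -/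
def nrm (v : V3) : ℝ := Real.sqrt (∑ i, v i ^ 2)

/-- The (normalized) Maxwellian M(v) = (2π)^{-3/2} exp(-|v|²/2). -/
def Mxw (v : V3) : ℝ := (2 * π) ^ (-(3 : ℝ) / 2) * Real.exp (-(∑ i, v i ^ 2) / 2)

/-- |α| = α₁ + α₂ + α₃ for a multi-index. -/
def degIdx (α : Fin 3 → ℕ) : ℕ := α 0 + α 1 + α 2

/-- α! = α₁! α₂! α₃! for a multi-index. -/
def multiFact (α : Fin 3 → ℕ) : ℕ := (α 0).factorial * (α 1).factorial * (α 2).factorial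

/-- Multidimensional Hermite polynomial
`H^α(v) = ((-1)^{|α|}/M(v)) ∂^{|α|} M(v) / ∂v₁^{α₁} ∂v₂^{α₂} ∂v₃^{α₃}`. -/
def Herm (α : Fin 3 → ℕ) (v : V3) : ℝ :=
  ((-1 : ℝ) ^ degIdx α / Mxw v) *
    iteratedDeriv (α 0) (fun x1 =>
      iteratedDeriv (α 1) (fun x2 =>
        iteratedDeriv (α 2) (fun x3 => Mxw ![x1, x2, x3]) (v 2)) (v 1)) (v 0)

/-- Partial derivative ∂f/∂vᵢ. -/
def pd (i : Fin 3) (f : V3 → ℝ) (v : V3) : ℝ := fderiv ℝ f v (Pi.single i 1)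

/-- Divergence of a vector field on ℝ³. -/
def div3 (F : V3 → V3) (v : V3) : ℝ := ∑ i, pd i (fun w => F w i) v

/-- Collision kernel matrix A(v) = Λ|v|^{γ+2} Π(v), Π_{ij}(v) = δ_{ij} - vᵢvⱼ/|v|². -/
def Aker (Λ γ : ℝ) (v : V3) (i j : Fin 3) : ℝ :=
  Λ * nrm v ^ (γ + 2) * ((if i = j then (1 : ℝ) else 0) - v i * v j / nrm v ^ 2)

/-- Fokker-Planck-Landau collision operator
`Q[f](v) = ∇_v · ∫ A(v-v*) (f(v*)∇_v f(v) - f(v)∇_{v*} f(v*)) dv*`. -/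
def Qcol (Λ γ : ℝ) (f : V3 → ℝ) (v : V3) : ℝ :=
  div3 (fun w i =>
    ∫ w₁ : V3, ∑ j, Aker Λ γ (w - w₁) i j * (f w₁ * pd j f w - f w * pd j f w₁)) v

/-- G_{st}(γ,p,q) = ∫ |g|^γ g_s g_t H^p(g) H^q(g) M(g) dg. -/
def Gst (γ : ℝ) (s t : Fin 3) (p q : Fin 3 → ℕ) : ℝ :=
  ∫ g : V3, nrm g ^ γ * g s * g t * Herm p g * Herm q g * Mxw g

/-- Generalized binomial coefficient C(x,k) = x(x-1)⋯(x-k+1)/k!. -/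
def genBinom (x : ℝ) (k : ℕ) : ℝ := (∏ j ∈ Finset.range k, (x - j)) / k.factorial

/-- Scalar coefficient a_{pq}^{λκ}, zero unless p+q = λ+κ. -/
def aCoe (p q lam kap : ℕ) : ℝ :=
  if p + q = lam + kap then
    (2 : ℝ) ^ (-(((p : ℝ) + q) / 2)) * lam.factorial * kap.factorial *
      ∑ s ∈ Finset.Icc (p - kap) (min p lam),
        (-1 : ℝ) ^ ((q : ℤ) - lam + s) /
          ((s.factorial * (lam - s).factorial * (p - s).factorial *
            ((q : ℤ) - lam + s).toNat.factorial : ℕ) : ℝ)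
  else 0

/-- Multi-index coefficient a_{p,q}^{λ,κ} = ∏ᵢ a_{pᵢqᵢ}^{λᵢκᵢ}. -/
def aMulti (p q lam kap : Fin 3 → ℕ) : ℝ := ∏ i, aCoe (p i) (q i) (lam i) (kap i)

/-- B_p^q(γ,s,t) = -G_{st}(γ,p,q) + δ_{st} Σ_r G_{rr}(γ,p,q). -/
def Bcoe (γ : ℝ) (s t : Fin 3) (p q : Fin 3 → ℕ) : ℝ :=
  -Gst γ s t p q + (if s = t then (1 : ℝ) else 0) * ∑ r, Gst γ r r p q

/-- The expansion coefficient A_α^{λ,κ} of the FPL collision operator. -/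
def coeA (Λ γ : ℝ) (α lam kap : Fin 3 → ℕ) : ℝ :=
  (1 / (multiFact α : ℝ)) *
    ∫ v : V3, Herm α v *
      div3 (fun w i =>
        ∫ w₁ : V3, ∑ j, Aker Λ γ (w - w₁) i j *
          (Herm lam w₁ * Mxw w₁ * pd j (fun u => Herm kap u * Mxw u) w -
            Herm lam w * Mxw w * pd j (fun u => Herm kap u * Mxw u) w₁)) v

/-- Multi-indices p with |p| < n, i.e. 0 ≤ |p| ≤ n-1. -/
def idxLt (n : ℕ) : Finset (Fin 3 → ℕ) :=
  (Fintype.piFinset (fun _ : Fin 3 => Finset.range n)).filter (fun p => degIdx p < n)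

/-- Pairs of multi-indices (p,q) with p + q = σ. -/
def idxPairs (σ : Fin 3 → ℕ) : Finset ((Fin 3 → ℕ) × (Fin 3 → ℕ)) :=
  ((Fintype.piFinset fun i => Finset.range (σ i + 1)) ×ˢ
      (Fintype.piFinset fun i => Finset.range (σ i + 1))).filter fun x => x.1 + x.2 = σ

/-- Multi-index permutation operator exchanging the i-th and j-th entries. -/
def swapIdx (i j : Fin 3) (p : Fin 3 → ℕ) : Fin 3 → ℕ := p ∘ Equiv.swap i j

/-- Associated Legendre function
`P_l^m(x) = ((-1)^m/(2^l l!)) (1-x²)^{m/2} d^{l+m}/dx^{l+m} (x²-1)^l`. -/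
def assocLegendre (l : ℕ) (m : ℤ) (x : ℝ) : ℝ :=
  ((-1 : ℝ) ^ m * (1 - x ^ 2) ^ ((m : ℝ) / 2) / (2 ^ l * l.factorial)) *
    iteratedDeriv ((l : ℤ) + m).toNat (fun y => (y ^ 2 - 1) ^ l) x

/-- Spherical harmonic Y_l^m(n), written in terms of cos θ = n₃ and φ = arg(n₁ + i n₂). -/
def sphHarm (l : ℕ) (m : ℤ) (n : V3) : ℂ :=
  ((Real.sqrt ((2 * l + 1) / (4 * π) * ((l : ℤ) - m).toNat.factorial /
      ((l : ℤ) + m).toNat.factorial) * assocLegendre l m (n 2) : ℝ) : ℂ) *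
    Complex.exp (Complex.I * m * (Complex.arg ((n 0 : ℂ) + n 1 * Complex.I) : ℝ))

/-- Spherical harmonic with the convention Y_{l'}^{m'} = 0 when |m'| > l' or l' < 0. -/
def sphHarmZ (l m : ℤ) (n : V3) : ℂ :=
  if 0 ≤ l ∧ m.natAbs ≤ l.toNat then sphHarm l.toNat m n else 0

/-- Surface integral over the unit sphere S² in spherical coordinates. -/
def sphereIntegral (F : V3 → ℂ) : ℂ :=
  ∫ θ in (0 : ℝ)..π, ∫ φ in (0 : ℝ)..(2 * π),
    F ![Real.sin θ * Real.cos φ, Real.sin θ * Real.sin φ, Real.cos θ] * (Real.sin θ : ℂ)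

/-- Laguerre polynomial L_n^{(β)}(x) = (x^{-β} eˣ / n!) dⁿ/dxⁿ [x^{n+β} e^{-x}]. -/
def laguerre (n : ℕ) (β : ℝ) (x : ℝ) : ℝ :=
  (x ^ (-β) * Real.exp x / n.factorial) *
    iteratedDeriv n (fun y => y ^ ((n : ℝ) + β) * Real.exp (-y)) x

/-- Normalized Burnett polynomial B_{α̂}(v) with α̂ = (l, m, nn). -/
def Burnett (l : ℕ) (m : ℤ) (nn : ℕ) (v : V3) : ℂ :=
  ((Real.sqrt ((2 : ℝ) ^ (1 - (l : ℝ)) * π ^ ((3 : ℝ) / 2) * nn.factorial /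
        Real.Gamma (nn + l + 3 / 2)) *
      laguerre nn ((l : ℝ) + 1 / 2) (nrm v ^ 2 / 2) * nrm v ^ l : ℝ) : ℂ) *
    sphHarm l m (fun i => v i / nrm v)

/-- Connection coefficient C_{α̂}^α = ∫ B_{α̂}(v) H^α(v) M(v) dv. -/
def coeC (l : ℕ) (m : ℤ) (nn : ℕ) (α : Fin 3 → ℕ) : ℂ :=
  ∫ v : V3, Burnett l m nn v * ((Herm α v * Mxw v : ℝ) : ℂ)

/-- Burnett indices α̂ = (α̂₁,α̂₂,α̂₃), α̂₂ ∈ {-α̂₁,…,α̂₁}, with |α̂|_B = α̂₁ + 2α̂₃ = N. -/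
def burnettIdx (N : ℕ) : Finset (ℕ × ℤ × ℕ) :=
  ((Finset.range (N + 1)) ×ˢ (Finset.Icc (-(N : ℤ)) N) ×ˢ (Finset.range (N + 1))).filter
    fun x => x.1 + 2 * x.2.2 = N ∧ x.2.1.natAbs ≤ x.1

/-- D_{n₁n₂}^{l₁l₂} = √(n₁!n₂!/(Γ(n₁+l₁+3/2)Γ(n₂+l₂+3/2))). -/
def Dcoe (n1 n2 l1 l2 : ℕ) : ℝ :=
  Real.sqrt ((n1.factorial * n2.factorial : ℝ) /
    (Real.Gamma (n1 + l1 + 3 / 2) * Real.Gamma (n2 + l2 + 3 / 2)))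

/-- K(μ,α,κ,m,n) = (-1)^{m+n} Γ(μ+1) Σᵢ C(μ-α,m-i) C(μ-κ,n-i) C(i+μ,i). -/
def Kcoe (μ a k : ℝ) (m n : ℕ) : ℝ :=
  (-1 : ℝ) ^ (m + n) * Real.Gamma (μ + 1) *
    ∑ i ∈ Finset.range (min m n + 1),
      genBinom (μ - a) (m - i) * genBinom (μ - k) (n - i) * genBinom ((i : ℝ) + μ) i

/-- F_{st}(l₁,m₁,l₂,m₂) = ∫_{S²} n_s n_t Y_{l₁}^{m₁}(n) Y_{l₂}^{m₂}(n) dn. -/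
def Fst (s t : Fin 3) (l1 : ℕ) (m1 : ℤ) (l2 : ℕ) (m2 : ℤ) : ℂ :=
  sphereIntegral fun n => ((n s * n t : ℝ) : ℂ) * sphHarm l1 m1 n * sphHarm l2 m2 n

/-- Kronecker delta on ℤ. -/
def kdZ (a b : ℤ) : ℝ := if a = b then 1 else 0

/-- η_{lm}^μ as in the paper (l, m, μ integers, μ ∈ {-1,0,1}). -/
def eta (l m μ : ℤ) : ℝ :=
  Real.sqrt ((((l : ℝ) + (2 * kdZ 1 μ - 1) * m + kdZ 1 μ) *
      ((l : ℝ) - (2 * kdZ (-1) μ - 1) * m + kdZ (-1) μ)) /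
    ((2 : ℝ) ^ μ.natAbs * (2 * l - 1) * (2 * l + 1)))

/-- General Maxwellian M_{ρ,u,θ}. -/
def Mgen (ρ θ : ℝ) (u : V3) (v : V3) : ℝ :=
  ρ / (2 * π * θ) ^ ((3 : ℝ) / 2) * Real.exp (-(nrm (v - u) ^ 2) / (2 * θ))

/-- Hermite coefficient f_α = (1/α!) ∫ H^α(v) f(v) dv. -/
def hermCoeff (f : V3 → ℝ) (α : Fin 3 → ℕ) : ℝ :=
  (1 / (multiFact α : ℝ)) * ∫ v : V3, Herm α v * f v

/-- τ(t) = 1 - 0.4 e^{-4t}. -/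
def tau (t : ℝ) : ℝ := 1 - 0.4 * Real.exp (-4 * t)

/-- The BKW distribution. -/
def fBKW (t : ℝ) (v : V3) : ℝ :=
  (2 * π * tau t) ^ (-(3 : ℝ) / 2) * Real.exp (-(nrm v ^ 2) / (2 * tau t)) *
    (1 + (1 - tau t) / tau t * (nrm v ^ 2 / (2 * tau t) - 3 / 2))

/-! Normalise the integral against `s ^ μ * e ^ (-s)` to a functional `Λ_μ` on polynomials,
determined by its moments `Λ_μ(X ^ j) = (μ + 1)(μ + 2)⋯(μ + j)`. The Chu–Vandermonde identity gives
`Λ_μ(L_n^{(a)}) = (-1) ^ n * C(μ - a, n)`. Multiplication by `X ^ j` shifts `Λ_μ` to `Λ_{μ + j}`, so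
`Λ_μ(X ^ j * L_n^{(μ)})` is a multiple of `C(j, n)`. This vanishes for `j < n`, which is the
orthogonality of the `L_n^{(μ)}`, and the case `j = n` yields their norms. A second use of
Chu–Vandermonde, after reflecting the coefficients by `C(x, k) = (-1) ^ k * C(k - 1 - x, k)`,
expands `L_n^{(a)}` in the `L_i^{(μ)}` with coefficients `(-1) ^ (n - i) * C(μ - a, n - i)`.
Substituting both expansions into the product leaves only the diagonal terms. -/

open Polynomial Finset

section Algebra

lemma sum_antidiagonal_assoc {A M : Type*} [AddMonoid A] [HasAntidiagonal A] [AddCommMonoid M]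
    (n : A) (f : A → A → A → M) :
    ∑ p ∈ antidiagonal n, ∑ q ∈ antidiagonal p.1, f q.1 q.2 p.2 =
      ∑ p ∈ antidiagonal n, ∑ q ∈ antidiagonal p.2, f p.1 q.1 q.2 := by
  simp only [sum_sigma']
  refine sum_nbij' (fun ⟨⟨_, k⟩, ⟨i, j⟩⟩ ↦ ⟨(i, j + k), (j, k)⟩)
    (fun ⟨⟨i, _⟩, ⟨j, k⟩⟩ ↦ ⟨(i + j, k), (i, j)⟩) ?_ ?_ ?_ ?_ ?_ <;>
    grind [HasAntidiagonal.mem_antidiagonal, add_assoc]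

lemma genBinom_eq_choose (x : ℝ) (k : ℕ) : genBinom x k = Ring.choose x k := by
  rw [genBinom, Ring.choose_eq_smul, smul_eq_mul, div_eq_inv_mul, ← aeval_eq_smeval, aeval_def,
    eval₂_eq_eval_map, descPochhammer_map, descPochhammer_eval_eq_prod_range]

lemma choose_eq_neg_one_pow_mul_choose {R : Type*} [Ring R] [BinomialRing R] (x : R) (k : ℕ) :
    Ring.choose x k = (-1) ^ k * Ring.choose (k - 1 - x) k := by
  rw [← neg_neg x, Ring.choose_neg, Units.smul_def, zsmul_eq_mul, Int.coe_negOnePow_natCast]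
  push_cast
  congr 2
  abel

lemma ascPochhammer_eval_eq_factorial_mul_choose {R : Type*} [Ring R] [BinomialRing R]
    (x : R) (k : ℕ) : (ascPochhammer R k).eval x = k.factorial * Ring.choose (x + k - 1) k := by
  rw [← ascPochhammer_smeval_eq_eval, ← Ring.factorial_nsmul_multichoose_eq_ascPochhammer,
    Ring.multichoose_eq, nsmul_eq_mul]

end Algebra

section LaguerreMoment

variable {R : Type*} [CommSemiring R]

/-- The functional `X ^ j ↦ (μ + 1)(μ + 2)⋯(μ + j)`. Over `ℝ`, for `μ > -1`, it is
`p ↦ Γ(μ + 1)⁻¹ ∫₀^∞ p(s) s ^ μ e ^ (-s) ds`; defining it by its moments makes the orthogonality of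
Laguerre polynomials a formal identity, available for every parameter and without integrals. -/
def laguerreMoment (μ : R) : R[X] →ₗ[R] R :=
  lsum fun j ↦ (ascPochhammer R j).eval (μ + 1) • LinearMap.id

lemma laguerreMoment_monomial (μ : R) (j : ℕ) (c : R) :
    laguerreMoment μ (monomial j c) = (ascPochhammer R j).eval (μ + 1) * c := by
  simp [laguerreMoment, lsum]

lemma laguerreMoment_X_pow_mul (μ : R) (j : ℕ) (p : R[X]) :
    laguerreMoment μ (X ^ j * p) =
      (ascPochhammer R j).eval (μ + 1) * laguerreMoment (μ + j) p := by
  induction p using Polynomial.induction_on' with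
  | add p q hp hq => rw [mul_add, map_add, hp, hq, map_add, mul_add]
  | monomial i c =>
    rw [X_pow_mul_monomial, laguerreMoment_monomial, laguerreMoment_monomial, add_comm i,
      ← ascPochhammer_mul, eval_mul, eval_comp, eval_add, eval_X, eval_natCast, mul_assoc,
      add_right_comm]

end LaguerreMoment

section LaguerrePolynomial

variable {K : Type*} [Field K] [CharZero K]

/-- The Laguerre polynomial `L_n^{(β)} = ∑ⱼ (-1) ^ j / j! * C(n + β, n - j) * X ^ j` as a formal
polynomial. The pairs of the antidiagonal are `(j, n - j)`, which avoids truncated subtraction. -/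
def laguerrePoly (n : ℕ) (β : K) : K[X] :=
  ∑ p ∈ antidiagonal n, monomial p.1 ((-1) ^ p.1 / p.1.factorial * Ring.choose (n + β) p.2)

lemma natDegree_laguerrePoly_le (n : ℕ) (β : K) : (laguerrePoly n β).natDegree ≤ n :=
  natDegree_sum_le_of_forall_le _ _ fun _ hp ↦
    (natDegree_monomial_le _).trans (HasAntidiagonal.antidiagonal.fst_le hp)

lemma coeff_laguerrePoly_self (n : ℕ) (β : K) :
    (laguerrePoly n β).coeff n = (-1) ^ n / n.factorial := by
  rw [laguerrePoly, finsetSum_coeff, sum_eq_single (n, 0)]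
  · simp
  · rintro ⟨j, k⟩ hp hne
    rw [HasAntidiagonal.mem_antidiagonal] at hp
    exact coeff_monomial_of_ne _ (by grind)
  · simp

lemma laguerrePoly_eq_sum_choose_neg (n : ℕ) (β : K) :
    laguerrePoly n β = ∑ p ∈ antidiagonal n,
      monomial p.1 ((-1) ^ n / p.1.factorial * Ring.choose (-(β + p.1 + 1)) p.2) := by
  refine sum_congr rfl fun p hp ↦ ?_
  rw [← mem_antidiagonal.mp hp, choose_eq_neg_one_pow_mul_choose, pow_add]
  congr 1
  push_cast
  ring_nf

theorem laguerrePoly_eq_sum_smul_laguerrePoly (n : ℕ) (a b : K) :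
    laguerrePoly n a =
      ∑ p ∈ antidiagonal n, ((-1) ^ p.2 * Ring.choose (b - a) p.2) • laguerrePoly p.1 b := by
  have term (p) (hp : p ∈ antidiagonal n) :
      ((-1) ^ p.2 * Ring.choose (b - a) p.2) • laguerrePoly p.1 b =
        ∑ q ∈ antidiagonal p.1, monomial q.1 ((-1) ^ n / q.1.factorial *
          (Ring.choose (-(b + q.1 + 1)) q.2 * Ring.choose (b - a) p.2)) := by
    rw [laguerrePoly_eq_sum_choose_neg, smul_sum, ← mem_antidiagonal.mp hp, pow_add]
    refine sum_congr rfl fun q _ ↦ ?_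
    rw [smul_monomial, smul_eq_mul]
    congr 1
    ring
  rw [sum_congr rfl term, sum_antidiagonal_assoc n fun j l k ↦ monomial j ((-1) ^ n / j.factorial *
    (Ring.choose (-(b + j + 1)) l * Ring.choose (b - a) k)), laguerrePoly_eq_sum_choose_neg]
  refine sum_congr rfl fun p _ ↦ ?_
  rw [← map_sum, ← mul_sum, ← Ring.add_choose_eq _ (Commute.all _ _)]
  congr 3
  ring

lemma laguerreMoment_laguerrePoly (μ a : K) (n : ℕ) :
    laguerreMoment μ (laguerrePoly n a) = (-1) ^ n * Ring.choose (μ - a) n := by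
  have term (p : ℕ × ℕ) : laguerreMoment μ
      (monomial p.1 ((-1) ^ p.1 / p.1.factorial * Ring.choose (n + a) p.2)) =
        Ring.choose (-(μ + 1)) p.1 * Ring.choose (n + a) p.2 := by
    rw [laguerreMoment_monomial, ascPochhammer_eval_eq_factorial_mul_choose,
      choose_eq_neg_one_pow_mul_choose (-(μ + 1))]
    have : (p.1.factorial : K) ≠ 0 := mod_cast p.1.factorial_ne_zero
    field_simp
    ring_nf
  rw [laguerrePoly, map_sum, sum_congr rfl fun p _ ↦ term p,
    ← Ring.add_choose_eq _ (Commute.all _ _), choose_eq_neg_one_pow_mul_choose]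
  ring_nf

lemma laguerreMoment_X_pow_mul_laguerrePoly (μ : K) (j n : ℕ) :
    laguerreMoment μ (X ^ j * laguerrePoly n μ) =
      (-1) ^ n * (ascPochhammer K j).eval (μ + 1) * j.choose n := by
  rw [laguerreMoment_X_pow_mul, laguerreMoment_laguerrePoly, add_sub_cancel_left,
    Ring.choose_natCast]
  ring

theorem laguerreMoment_mul_laguerrePoly_of_natDegree_le (μ : K) {p : K[X]} {n : ℕ}
    (hp : p.natDegree ≤ n) :
    laguerreMoment μ (p * laguerrePoly n μ) =
      (-1) ^ n * (ascPochhammer K n).eval (μ + 1) * p.coeff n := by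
  conv_lhs => rw [p.as_sum_range_C_mul_X_pow' (Nat.lt_succ_of_le hp)]
  simp only [sum_mul, map_sum, ← smul_eq_C_mul, smul_mul_assoc, map_smul,
    laguerreMoment_X_pow_mul_laguerrePoly, smul_eq_mul]
  rw [sum_range_succ, sum_eq_zero]
  · rw [Nat.choose_self]
    ring
  · intro j hj
    simp [Nat.choose_eq_zero_of_lt (mem_range.mp hj)]

theorem laguerreMoment_laguerrePoly_mul_laguerrePoly_self (μ : K) (n : ℕ) :
    laguerreMoment μ (laguerrePoly n μ * laguerrePoly n μ) = Ring.choose (n + μ) n := by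
  have h : (n.factorial : K) ≠ 0 := mod_cast n.factorial_ne_zero
  have sign : ((-1 : K) ^ n) ^ 2 = 1 := by rw [pow_right_comm, neg_one_sq, one_pow]
  rw [laguerreMoment_mul_laguerrePoly_of_natDegree_le μ (natDegree_laguerrePoly_le n μ),
    coeff_laguerrePoly_self, ascPochhammer_eval_eq_factorial_mul_choose]
  field_simp
  rw [sign]
  ring_nf

theorem laguerreMoment_laguerrePoly_mul_laguerrePoly_of_ne (μ : K) {m n : ℕ} (h : m ≠ n) :
    laguerreMoment μ (laguerrePoly m μ * laguerrePoly n μ) = 0 := by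
  wlog hlt : m < n generalizing m n
  · rw [mul_comm, this h.symm (by omega)]
  have hdeg := (natDegree_laguerrePoly_le m μ).trans_lt hlt
  rw [laguerreMoment_mul_laguerrePoly_of_natDegree_le μ hdeg.le,
    coeff_eq_zero_of_natDegree_lt hdeg, mul_zero]

theorem laguerreMoment_laguerrePoly_mul_laguerrePoly (μ a b : K) (m n : ℕ) :
    laguerreMoment μ (laguerrePoly m a * laguerrePoly n b) =
      (-1) ^ (m + n) * ∑ i ∈ range (min m n + 1),
        Ring.choose (μ - a) (m - i) * Ring.choose (μ - b) (n - i) * Ring.choose (i + μ) i := by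
  have orth (i j) : laguerreMoment μ (laguerrePoly i μ * laguerrePoly j μ) =
      if i = j then Ring.choose (i + μ) i else 0 := by
    split_ifs with h
    · rw [← h, laguerreMoment_laguerrePoly_mul_laguerrePoly_self]
    · exact laguerreMoment_laguerrePoly_mul_laguerrePoly_of_ne μ h
  have hrange : {i ∈ range (m + 1) | i ∈ range (n + 1)} = range (min m n + 1) := by
    grind
  rw [laguerrePoly_eq_sum_smul_laguerrePoly m a μ, laguerrePoly_eq_sum_smul_laguerrePoly n b μ]
  simp only [Nat.sum_antidiagonal_eq_sum_range_succ_mk, sum_mul_sum, map_sum, smul_mul_smul_comm,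
    map_smul, orth, smul_eq_mul, mul_ite, mul_zero, sum_ite_eq]
  rw [← sum_filter, hrange, mul_sum]
  refine sum_congr rfl fun i hi ↦ ?_
  have sign : (-1 : K) ^ (m + n) = (-1) ^ (m - i) * (-1) ^ (n - i) := by
    rw [← pow_add]
    exact neg_one_pow_congr (by grind)
  rw [sign]
  ring

end LaguerrePolynomial

section Analysis

lemma Gamma_add_natCast {x : ℝ} (hx : ∀ k : ℕ, x ≠ -k) (n : ℕ) :
    Gamma (x + n) = (ascPochhammer ℝ n).eval x * Gamma x := by
  induction n with
  | zero => simp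
  | succ n ih =>
    have : x + n ≠ 0 := fun h ↦ hx n (eq_neg_of_add_eq_zero_left h)
    rw [Nat.cast_succ, ← add_assoc, Gamma_add_one this, ih, ascPochhammer_succ_eval]
    ring

lemma exp_neg_mul_rpow_add_natCast {μ s : ℝ} (hs : 0 < s) (j : ℕ) :
    exp (-s) * s ^ (μ + 1 + j - 1) = s ^ j * (s ^ μ * exp (-s)) := by
  rw [add_right_comm, add_sub_cancel_right, rpow_add hs, rpow_natCast]
  ring

lemma integrableOn_eval_mul_rpow_mul_exp_neg {μ : ℝ} (hμ : -1 < μ) (p : ℝ[X]) :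
    IntegrableOn (fun s ↦ p.eval s * (s ^ μ * exp (-s))) (Set.Ioi 0) := by
  induction p using Polynomial.induction_on' with
  | add p q hp hq =>
    simp only [eval_add, add_mul]
    exact hp.add hq
  | monomial j c =>
    have hpos : 0 < μ + 1 + j := by linarith [j.cast_nonneg (α := ℝ)]
    simp only [eval_monomial, mul_assoc]
    exact ((GammaIntegral_convergent hpos).congr_fun
      (fun s hs ↦ exp_neg_mul_rpow_add_natCast hs j) measurableSet_Ioi).const_mul c

theorem integral_eval_mul_rpow_mul_exp_neg {μ : ℝ} (hμ : -1 < μ) (p : ℝ[X]) :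
    ∫ s in Set.Ioi 0, p.eval s * (s ^ μ * exp (-s)) = Gamma (μ + 1) * laguerreMoment μ p := by
  induction p using Polynomial.induction_on' with
  | add p q hp hq =>
    simp only [eval_add, add_mul]
    rw [integral_add (integrableOn_eval_mul_rpow_mul_exp_neg hμ p)
      (integrableOn_eval_mul_rpow_mul_exp_neg hμ q), hp, hq, map_add, mul_add]
  | monomial j c =>
    have hne (k : ℕ) : μ + 1 ≠ -k := by linarith [k.cast_nonneg (α := ℝ)]
    have hpos : 0 < μ + 1 + j := by linarith [j.cast_nonneg (α := ℝ)]
    have hmoment : ∫ s in Set.Ioi 0, s ^ j * (s ^ μ * exp (-s)) = Gamma (μ + 1 + j) := by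
      rw [Gamma_eq_integral hpos]
      exact setIntegral_congr_fun measurableSet_Ioi fun s hs ↦
        (exp_neg_mul_rpow_add_natCast hs j).symm
    simp only [eval_monomial, mul_assoc]
    rw [integral_const_mul, hmoment, Gamma_add_natCast hne, laguerreMoment_monomial]
    ring

lemma iteratedDeriv_rpow_const (r x : ℝ) (k : ℕ) :
    iteratedDeriv k (fun y ↦ y ^ r) x = k.factorial * Ring.choose r k * x ^ (r - k) := by
  rw [iteratedDeriv_eq_iterate, iter_deriv_rpow_const, descPochhammer_eval_eq_prod_range,
    ← genBinom_eq_choose, genBinom, mul_div_cancel₀ _ (by positivity)]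

lemma iteratedDeriv_exp_neg (k : ℕ) (x : ℝ) :
    iteratedDeriv k (fun y ↦ exp (-y)) x = (-1) ^ k * exp (-x) := by
  simpa using congrFun (iteratedDeriv_exp_const_mul k (-1)) x

theorem laguerre_eq_eval_laguerrePoly (n : ℕ) (β : ℝ) {x : ℝ} (hx : 0 < x) :
    laguerre n β x = (laguerrePoly n β).eval x := by
  have hpow : ContDiffAt ℝ n (fun y : ℝ ↦ y ^ (n + β)) x := contDiffAt_rpow_const (Or.inl hx.ne')
  have hexp : ContDiffAt ℝ n (fun y : ℝ ↦ exp (-y)) x := by fun_prop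
  have hcomm : (fun y : ℝ ↦ y ^ (n + β) * exp (-y)) = fun y ↦ exp (-y) * y ^ (n + β) :=
    funext fun _ ↦ mul_comm _ _
  rw [laguerre, hcomm, iteratedDeriv_fun_mul hexp hpow, laguerrePoly, eval_finsetSum,
    Nat.sum_antidiagonal_eq_sum_range_succ_mk, mul_sum]
  refine sum_congr rfl fun j hj ↦ ?_
  have hjn : j ≤ n := Nat.lt_succ_iff.mp (mem_range.mp hj)
  have hexponent : n + β - (n - j : ℕ) = β + j := by
    rw [Nat.cast_sub hjn]
    ring
  rw [iteratedDeriv_exp_neg, iteratedDeriv_rpow_const, hexponent, eval_monomial,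
    Nat.cast_choose ℝ hjn, rpow_add hx, rpow_natCast, rpow_neg hx.le, exp_neg]
  have := (rpow_pos_of_pos hx β).ne'
  field_simp

end Analysis

/-- the weighted integral of a product of two Laguerre polynomials. -/
theorem laguerre_product_integral (μ a k : ℝ) (hμ : μ > -1) (m n : ℕ) :
    (∫ s in Set.Ioi (0 : ℝ), laguerre m a s * laguerre n k s * s ^ μ * Real.exp (-s)) =
      (-1 : ℝ) ^ (m + n) * Real.Gamma (μ + 1) *
        ∑ i ∈ Finset.range (min m n + 1),
          genBinom (μ - a) (m - i) * genBinom (μ - k) (n - i) * genBinom ((i : ℝ) + μ) i := by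
  have integrand (s : ℝ) (hs : 0 < s) : laguerre m a s * laguerre n k s * s ^ μ * exp (-s) =
      (laguerrePoly m a * laguerrePoly n k).eval s * (s ^ μ * exp (-s)) := by
    rw [laguerre_eq_eval_laguerrePoly m a hs, laguerre_eq_eval_laguerrePoly n k hs, eval_mul,
      mul_assoc]
  rw [setIntegral_congr_fun measurableSet_Ioi integrand, integral_eval_mul_rpow_mul_exp_neg hμ,
    laguerreMoment_laguerrePoly_mul_laguerrePoly]
  simp only [genBinom_eq_choose]
  ring
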